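/- arXiv:1407.5898 — 2 statements merged into one kernel-verified Lean document; each statement's English description precedes it below -/
import Mathlib

section
/- Let f, g ∈ ℤ[x] be non-zero polynomials of degrees n ≥ 1 and m ≥ 1, let d ∈ ℤ[x] be a non-zero common divisor of f and g, and suppose R = res(f/d, g/d) ≠ 0. If k is the number of pairwise distinct prime divisors of |R|, then the product of the first k prime numbers is at most A_{f,g} = 2^(2nm−n−m) · √((n+1)^m · (m+1)^n) · ‖f‖^m · ‖g‖^n. -/
open Polynomial

/-- The norm `‖f‖ = √(a₀² + ⋯ + aₙ²)` of an integer polynomial. -/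
noncomputable def polyNorm (f : Polynomial ℤ) : ℝ :=
  Real.sqrt (∑ i ∈ Finset.range (f.natDegree + 1), ((f.coeff i : ℝ)) ^ 2)

/-- The `k`-th primorial: the product of the first `k` prime numbers. -/
noncomputable def kthPrimorial (k : ℕ) : ℕ := ∏ i ∈ Finset.range k, Nat.nth Nat.Prime i

/-- The Sylvester matrix of `f` and `g`: an `(m+n) × (m+n)` matrix (`n = deg f`,
`m = deg g`) whose first `m` rows contain the shifted coefficients of `f` (in
descending order) and whose last `n` rows contain the shifted coefficients of `g`. -/
def sylvester {R : Type*} [CommRing R] (f g : Polynomial R) :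
    Matrix (Fin (g.natDegree + f.natDegree)) (Fin (g.natDegree + f.natDegree)) R :=
  Matrix.of fun i j =>
    if (i : ℕ) < g.natDegree then
      (if (i : ℕ) ≤ (j : ℕ) ∧ (j : ℕ) ≤ (i : ℕ) + f.natDegree then
        f.coeff (f.natDegree - ((j : ℕ) - (i : ℕ))) else 0)
    else
      (if (i : ℕ) - g.natDegree ≤ (j : ℕ) ∧ (j : ℕ) ≤ (i : ℕ) then
        g.coeff (g.natDegree - ((j : ℕ) - ((i : ℕ) - g.natDegree))) else 0)

/-- The resultant of two polynomials: the determinant of their Sylvester matrix. -/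
def resultant {R : Type*} [CommRing R] (f g : Polynomial R) : R :=
  (_root_.sylvester f g).det

/-! If `|α - β| ≤ 2 max(1, |α|) max(1, |β|)` is multiplied over all roots `α` of `f` and `β` of
`g`, the product formula for the resultant gives `|res(f, g)| ≤ 2 ^ (n m) M(f) ^ m M(g) ^ n`, where
`M` is the Mahler measure. A non-zero integer polynomial has Mahler measure at least `1`, so by
multiplicativity `M` does not increase when one passes to a divisor, and Landau's inequality
`M(f) ≤ ‖f‖` bounds the resultant of divisors of `f` and `g` by the norms of `f` and `g`. A positive
integer with `k` distinct prime divisors is at least the product of the first `k` primes. The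
constant `2 ^ (n m)` is finally absorbed because, for `n, m ≥ 1`, one has `n m ≤ 2 n m - n - m + 1`
and the square root is at least `2`. -/

theorem prod_nth_card_le_prod {p : ℕ → Prop} (s : Finset ℕ) (hs : ∀ n ∈ s, p n) :
    ∏ i ∈ Finset.range s.card, Nat.nth p i ≤ ∏ n ∈ s, n := by
  classical
  induction s using Finset.induction_on_max with
  | empty => simp
  | insert a s s_lt_a ih =>
    have a_notMem : a ∉ s := fun ha => (s_lt_a a ha).false
    have ha : p a := hs a (Finset.mem_insert_self a s)
    have hs' : ∀ n ∈ s, p n := fun n hn => hs n (Finset.mem_insert_of_mem hn)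
    have card_le_count : s.card ≤ Nat.count p a := by
      rw [Nat.count_eq_card_filter_range]
      exact Finset.card_le_card fun n hn => by simp [s_lt_a n hn, hs' n hn]
    have nth_card_le : Nat.nth p s.card ≤ a :=
      calc Nat.nth p s.card ≤ Nat.nth p (Nat.count p a) :=
            Nat.nth_le_nth' card_le_count fun hfin => Nat.count_lt_card hfin ha
        _ = a := Nat.nth_count ha
    rw [Finset.card_insert_of_notMem a_notMem, Finset.prod_range_succ,
      Finset.prod_insert a_notMem, mul_comm a]
    exact Nat.mul_le_mul (ih hs') nth_card_le

theorem kthPrimorial_card_primeFactors_le {n : ℕ} (hn : n ≠ 0) :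
    kthPrimorial n.primeFactors.card ≤ n :=
  (prod_nth_card_le_prod _ fun _ => Nat.prime_of_mem_primeFactors).trans
    (Nat.le_of_dvd (Nat.pos_of_ne_zero hn) (Nat.prod_primeFactors_dvd n))

section Resultant

variable {R : Type*} [CommRing R]

/- Mathlib puts the coefficients in columns and in ascending order, so the two Sylvester matrices
differ by a transposition and a reversal of both indices. -/
theorem sylvester_eq_submatrix_transpose (f g : R[X]) :
    _root_.sylvester f g =
      (Polynomial.sylvester f g f.natDegree g.natDegree).transpose.submatrix
        (Fin.revPerm.trans (finCongr (add_comm _ _)))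
        (Fin.revPerm.trans (finCongr (add_comm _ _))) := by
  ext i j
  set e : Fin (g.natDegree + f.natDegree) ≃ Fin (f.natDegree + g.natDegree) :=
    Fin.revPerm.trans (finCongr (add_comm _ _))
  have val_e (l) : (e l : ℕ) = g.natDegree + f.natDegree - (l + 1) := by simp [e]
  have hi := val_e i
  have hj := val_e j
  rw [Matrix.submatrix_apply, Matrix.transpose_apply]
  generalize e i = a at hi ⊢
  generalize e j = b at hj ⊢
  simp only [_root_.sylvester, Polynomial.sylvester, Matrix.of_apply]
  induction a using Fin.addCases with
  | left a =>
    rw [Fin.val_castAdd] at hi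
    simp only [Fin.addCases_left, Set.mem_Icc]
    grind
  | right a =>
    rw [Fin.val_natAdd] at hi
    simp only [Fin.addCases_right, Set.mem_Icc]
    grind

theorem resultant_eq_polynomial_resultant (f g : R[X]) :
    _root_.resultant f g = Polynomial.resultant f g := by
  rw [_root_.resultant, sylvester_eq_submatrix_transpose, Matrix.det_submatrix_equiv_self,
    Matrix.det_transpose, Polynomial.resultant]

end Resultant

theorem norm_sub_le_two_mul_max_one_mul_max_one {E : Type*} [SeminormedAddGroup E] (a b : E) :
    ‖a - b‖ ≤ 2 * max 1 ‖a‖ * max 1 ‖b‖ := by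
  have one_le_a : 1 ≤ max 1 ‖a‖ := le_max_left _ _
  have one_le_b : 1 ≤ max 1 ‖b‖ := le_max_left _ _
  calc ‖a - b‖ ≤ max 1 ‖a‖ + max 1 ‖b‖ :=
        (norm_sub_le a b).trans (add_le_add (le_max_right _ _) (le_max_right _ _))
    _ ≤ 2 * max 1 ‖a‖ * max 1 ‖b‖ := by nlinarith

theorem norm_multiset_prod_map {ι K : Type*} [NormedField K] (s : Multiset ι) (u : ι → K) :
    ‖(s.map u).prod‖ = (s.map fun i => ‖u i‖).prod := by
  rw [← normHom_apply, map_multiset_prod, Multiset.map_map]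
  rfl

theorem norm_eval_le_two_pow_mul_mahlerMeasure (p : ℂ[X]) (z : ℂ) :
    ‖p.eval z‖ ≤ 2 ^ p.natDegree * p.mahlerMeasure * max 1 ‖z‖ ^ p.natDegree := by
  have p_splits := IsAlgClosed.splits p
  calc ‖p.eval z‖ = ‖p.leadingCoeff‖ * (p.roots.map fun r => ‖z - r‖).prod := by
        rw [p_splits.eval_eq_prod_roots, norm_mul, norm_multiset_prod_map]
    _ ≤ ‖p.leadingCoeff‖ * (p.roots.map fun r => 2 * max 1 ‖z‖ * max 1 ‖r‖).prod := by
        gcongr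
        exact Multiset.prod_map_le_prod_map₀ _ _ (fun _ _ => norm_nonneg _)
          fun r _ => norm_sub_le_two_mul_max_one_mul_max_one z r
    _ = 2 ^ p.natDegree * p.mahlerMeasure * max 1 ‖z‖ ^ p.natDegree := by
        rw [Multiset.prod_map_mul, Multiset.map_const', Multiset.prod_replicate,
          ← p_splits.natDegree_eq_card_roots, mahlerMeasure_eq_leadingCoeff_mul_prod_roots]
        ring

theorem norm_resultant_le_mahlerMeasure (p q : ℂ[X]) :
    ‖Polynomial.resultant p q‖ ≤
      2 ^ (p.natDegree * q.natDegree) * p.mahlerMeasure ^ q.natDegree *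
        q.mahlerMeasure ^ p.natDegree := by
  have p_splits := IsAlgClosed.splits p
  calc ‖Polynomial.resultant p q‖
      = ‖p.leadingCoeff‖ ^ q.natDegree * (p.roots.map fun r => ‖q.eval r‖).prod := by
        rw [resultant_eq_prod_eval p q _ le_rfl p_splits, norm_mul, norm_pow,
          norm_multiset_prod_map]
    _ ≤ ‖p.leadingCoeff‖ ^ q.natDegree * (p.roots.map fun r =>
          2 ^ q.natDegree * q.mahlerMeasure * max 1 ‖r‖ ^ q.natDegree).prod := by
        gcongr
        exact Multiset.prod_map_le_prod_map₀ _ _ (fun _ _ => norm_nonneg _)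
          fun r _ => norm_eval_le_two_pow_mul_mahlerMeasure q r
    _ = 2 ^ (p.natDegree * q.natDegree) * p.mahlerMeasure ^ q.natDegree *
          q.mahlerMeasure ^ p.natDegree := by
        rw [Multiset.prod_map_mul, Multiset.map_const', Multiset.prod_replicate,
          Multiset.prod_map_pow, ← p_splits.natDegree_eq_card_roots,
          mahlerMeasure_eq_leadingCoeff_mul_prod_roots p]
        ring

theorem abs_resultant_le_mahlerMeasure (f g : ℤ[X]) :
    |((_root_.resultant f g : ℤ) : ℝ)| ≤
      2 ^ (f.natDegree * g.natDegree) *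
        (f.map (Int.castRingHom ℂ)).mahlerMeasure ^ g.natDegree *
        (g.map (Int.castRingHom ℂ)).mahlerMeasure ^ f.natDegree := by
  have natDegree_map (p : ℤ[X]) : (p.map (Int.castRingHom ℂ)).natDegree = p.natDegree :=
    natDegree_map_eq_of_injective (Int.castRingHom ℂ).injective_int p
  have complex_bound :=
    norm_resultant_le_mahlerMeasure (f.map (Int.castRingHom ℂ)) (g.map (Int.castRingHom ℂ))
  rwa [natDegree_map, natDegree_map, resultant_map_map, ← resultant_eq_polynomial_resultant,
    eq_intCast, Complex.norm_intCast] at complex_bound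

theorem mahlerMeasure_map_le_of_dvd {f g : ℤ[X]} (hg : g ≠ 0) (hfg : f ∣ g) :
    (f.map (Int.castRingHom ℂ)).mahlerMeasure ≤ (g.map (Int.castRingHom ℂ)).mahlerMeasure := by
  obtain ⟨r, rfl⟩ := hfg
  rw [Polynomial.map_mul, mahlerMeasure_mul]
  exact le_mul_of_one_le_right (mahlerMeasure_nonneg _)
    (one_le_mahlerMeasure_of_ne_zero (right_ne_zero_of_mul hg))

theorem mahlerMeasure_map_le_polyNorm (f : ℤ[X]) :
    (f.map (Int.castRingHom ℂ)).mahlerMeasure ≤ polyNorm f := by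
  refine (mahlerMeasure_le_sqrt_sum_sq_norm_coeff _).trans (Real.sqrt_le_sqrt ?_)
  have support_subset :
      (f.map (Int.castRingHom ℂ)).support ⊆ Finset.range (f.natDegree + 1) :=
    (support_map_subset _ f).trans supp_subset_range_natDegree_succ
  simpa only [coeff_map, eq_intCast, Complex.norm_intCast, sq_abs] using
    Finset.sum_le_sum_of_subset_of_nonneg support_subset fun i _ _ => sq_nonneg (f.coeff i : ℝ)

theorem polyNorm_nonneg (f : ℤ[X]) : 0 ≤ polyNorm f :=
  Real.sqrt_nonneg _

theorem one_le_polyNorm {f : ℤ[X]} (hf : f ≠ 0) : 1 ≤ polyNorm f :=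
  (one_le_mahlerMeasure_of_ne_zero hf).trans (mahlerMeasure_map_le_polyNorm f)

theorem abs_resultant_le_polyNorm_of_dvd {f g f₁ g₁ : ℤ[X]} (hf : f ≠ 0) (hg : g ≠ 0)
    (hf₁ : f₁ ∣ f) (hg₁ : g₁ ∣ g) :
    |((_root_.resultant f₁ g₁ : ℤ) : ℝ)| ≤
      2 ^ (f.natDegree * g.natDegree) * polyNorm f ^ g.natDegree * polyNorm g ^ f.natDegree := by
  have mahlerMeasure_pow_le {h h₁ : ℤ[X]} (hh : h ≠ 0) (hh₁ : h₁ ∣ h) {a b : ℕ} (hab : a ≤ b) :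
      (h₁.map (Int.castRingHom ℂ)).mahlerMeasure ^ a ≤ polyNorm h ^ b :=
    (pow_le_pow_left₀ (mahlerMeasure_nonneg _)
      ((mahlerMeasure_map_le_of_dvd hh hh₁).trans (mahlerMeasure_map_le_polyNorm h)) a).trans
      (pow_le_pow_right₀ (one_le_polyNorm hh) hab)
  have hn : f₁.natDegree ≤ f.natDegree := natDegree_le_of_dvd hf₁ hf
  have hm : g₁.natDegree ≤ g.natDegree := natDegree_le_of_dvd hg₁ hg
  have hM_f₁ := mahlerMeasure_nonneg (f₁.map (Int.castRingHom ℂ))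
  have hM_g₁ := mahlerMeasure_nonneg (g₁.map (Int.castRingHom ℂ))
  have norm_f_nonneg := polyNorm_nonneg f
  refine (abs_resultant_le_mahlerMeasure f₁ g₁).trans ?_
  gcongr ?_ * ?_ * ?_
  · exact pow_le_pow_right₀ one_le_two (Nat.mul_le_mul hn hm)
  · exact mahlerMeasure_pow_le hf hf₁ hm
  · exact mahlerMeasure_pow_le hg hg₁ hn

theorem two_pow_mul_le_two_pow_mul_sqrt {n m : ℕ} (hn : 1 ≤ n) (hm : 1 ≤ m) :
    (2 : ℝ) ^ (n * m) ≤
      2 ^ (2 * n * m - n - m) * Real.sqrt ((n + 1) ^ m * (m + 1) ^ n) := by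
  have exponent_le : n * m ≤ 2 * n * m - n - m + 1 := by
    obtain ⟨a, rfl⟩ := Nat.exists_eq_add_of_le hn
    obtain ⟨b, rfl⟩ := Nat.exists_eq_add_of_le hm
    ring_nf
    lia
  have two_le_succ_pow {a b : ℕ} (ha : 1 ≤ a) (hb : 1 ≤ b) : (2 : ℝ) ≤ (a + 1) ^ b :=
    calc (2 : ℝ) ≤ a + 1 := by exact_mod_cast Nat.succ_le_succ ha
      _ ≤ (a + 1) ^ b := le_self_pow₀ (by linarith [a.cast_nonneg (α := ℝ)]) (by lia)
  have two_le_sqrt : 2 ≤ Real.sqrt (((n : ℝ) + 1) ^ m * ((m : ℝ) + 1) ^ n) :=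
    Real.le_sqrt_of_sq_le <|
      calc (2 : ℝ) ^ 2 = 2 * 2 := sq 2
        _ ≤ (n + 1) ^ m * (m + 1) ^ n :=
          mul_le_mul (two_le_succ_pow hn hm) (two_le_succ_pow hm hn) zero_le_two (by positivity)
  calc (2 : ℝ) ^ (n * m) ≤ 2 ^ (2 * n * m - n - m + 1) :=
        pow_le_pow_right₀ one_le_two exponent_le
    _ = 2 ^ (2 * n * m - n - m) * 2 := pow_succ _ _
    _ ≤ _ := by gcongr

theorem kthPrimorial_le_resultant_bound_general {f g f₁ g₁ : ℤ[X]} (hf : f ≠ 0) (hg : g ≠ 0)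
    (hf₁ : f₁ ∣ f) (hg₁ : g₁ ∣ g) (hR : _root_.resultant f₁ g₁ ≠ 0) :
    (kthPrimorial (_root_.resultant f₁ g₁).natAbs.primeFactors.card : ℝ) ≤
      2 ^ (f.natDegree * g.natDegree) * polyNorm f ^ g.natDegree * polyNorm g ^ f.natDegree :=
  calc (kthPrimorial (_root_.resultant f₁ g₁).natAbs.primeFactors.card : ℝ)
      ≤ (_root_.resultant f₁ g₁).natAbs := by
        exact_mod_cast kthPrimorial_card_primeFactors_le (Int.natAbs_ne_zero.2 hR)
    _ = |((_root_.resultant f₁ g₁ : ℤ) : ℝ)| := by rw [Nat.cast_natAbs, Int.cast_abs]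
    _ ≤ _ := abs_resultant_le_polyNorm_of_dvd hf hg hf₁ hg₁

/-- For non-zero `f, g ∈ ℤ[x]` of degrees `n, m ≥ 1`, a non-zero common divisor `d` of
`f` and `g` with `R = res(f/d, g/d) ≠ 0`, if `k` is the number of pairwise distinct
prime divisors of `|R|`, then the product of the first `k` primes is at most
`A_{f,g} = 2^(2nm - n - m) · √((n+1)^m (m+1)^n) · ‖f‖^m · ‖g‖^n`. -/
theorem kthPrimorial_le_resultant_bound (f g d f₁ g₁ : Polynomial ℤ)
    (hf : f ≠ 0) (hg : g ≠ 0) (hd : d ≠ 0)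
    (hn : 1 ≤ f.natDegree) (hm : 1 ≤ g.natDegree)
    (hf₁ : f = d * f₁) (hg₁ : g = d * g₁)
    (hR : _root_.resultant f₁ g₁ ≠ 0) :
    (kthPrimorial (_root_.resultant f₁ g₁).natAbs.primeFactors.card : ℝ) ≤
      2 ^ (2 * f.natDegree * g.natDegree - f.natDegree - g.natDegree) *
        Real.sqrt ((f.natDegree + 1) ^ g.natDegree * (g.natDegree + 1) ^ f.natDegree) *
        polyNorm f ^ g.natDegree * polyNorm g ^ f.natDegree := by
  have norm_f_nonneg := polyNorm_nonneg f
  have norm_g_nonneg := polyNorm_nonneg g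
  refine (kthPrimorial_le_resultant_bound_general hf hg (Dvd.intro_left d hf₁.symm)
    (Dvd.intro_left d hg₁.symm) hR).trans ?_
  gcongr
  exact two_pow_mul_le_two_pow_mul_sqrt hn hm
end

section
/- Let f, g ∈ ℤ[x] be non-zero polynomials and let q be a prime that does not divide at least one of theleading coefficients of f and g. If a greatest common divisor of f_q and g_q in (ℤ/qℤ)[x] has degree 0, then f and g have no common divisor of positive degree in ℤ[x]. -/
open Polynomial

/-!
Write `f_φ` for the image of `f` under a coefficientwise ring homomorphism `φ`. If `φ` does not kill
the leading coefficient of `f`, then it does not kill that of any divisor `h` of `f` either, as the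
latter divides the former; so `h_φ` has the same degree as `h`. When `h` also divides `g`, `h_φ`
divides every greatest common divisor of `f_φ` and `g_φ`. This is nonzero because `f_φ` is, so over
a ring without zero divisors its degree is at least that of `h`.
-/

section ModularGCD

variable {R S : Type*} [Semiring R] [Semiring S] {φ : R →+* S} {f g h : R[X]} {e : S[X]}

theorem map_ne_zero_of_map_leadingCoeff_ne_zero (hf : φ f.leadingCoeff ≠ 0) : f.map φ ≠ 0 := by
  rwa [← leadingCoeff_ne_zero, leadingCoeff_map_of_leadingCoeff_ne_zero φ hf]

variable [NoZeroDivisors R]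

theorem natDegree_map_eq_of_dvd (hf : φ f.leadingCoeff ≠ 0) (hhf : h ∣ f) :
    (h.map φ).natDegree = h.natDegree :=
  natDegree_map_of_leadingCoeff_ne_zero φ
    (ne_zero_of_dvd_ne_zero hf (map_dvd φ (leadingCoeff_dvd_leadingCoeff hhf)))

variable [NoZeroDivisors S]

theorem natDegree_le_of_map_dvd_of_dvd_map (hf : φ f.leadingCoeff ≠ 0) (hhf : h ∣ f)
    (hhe : h.map φ ∣ e) (hef : e ∣ f.map φ) : h.natDegree ≤ e.natDegree := by
  have he : e ≠ 0 := ne_zero_of_dvd_ne_zero (map_ne_zero_of_map_leadingCoeff_ne_zero hf) hef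
  calc
    h.natDegree = (h.map φ).natDegree := (natDegree_map_eq_of_dvd hf hhf).symm
    _ ≤ e.natDegree := natDegree_le_of_dvd hhe he

theorem natDegree_le_natDegree_gcd_map (hlead : φ f.leadingCoeff ≠ 0 ∨ φ g.leadingCoeff ≠ 0)
    (hef : e ∣ f.map φ) (heg : e ∣ g.map φ)
    (hegcd : ∀ e' : S[X], e' ∣ f.map φ → e' ∣ g.map φ → e' ∣ e)
    (hhf : h ∣ f) (hhg : h ∣ g) : h.natDegree ≤ e.natDegree := by
  have hhe : h.map φ ∣ e := hegcd _ (Polynomial.map_dvd φ hhf) (Polynomial.map_dvd φ hhg)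
  rcases hlead with hf | hg
  · exact natDegree_le_of_map_dvd_of_dvd_map hf hhf hhe hef
  · exact natDegree_le_of_map_dvd_of_dvd_map hg hhg hhe heg

theorem no_common_divisor_of_modular_gcd_deg_zero_general
    (hlead : φ f.leadingCoeff ≠ 0 ∨ φ g.leadingCoeff ≠ 0)
    (hef : e ∣ f.map φ) (heg : e ∣ g.map φ)
    (hegcd : ∀ e' : S[X], e' ∣ f.map φ → e' ∣ g.map φ → e' ∣ e)
    (hdeg : e.natDegree = 0) :
    ¬ ∃ h : R[X], h ∣ f ∧ h ∣ g ∧ 0 < h.natDegree := by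
  rintro ⟨h, hhf, hhg, hpos⟩
  have hle : h.natDegree ≤ e.natDegree :=
    natDegree_le_natDegree_gcd_map hlead hef heg hegcd hhf hhg
  exact hpos.not_ge (hdeg ▸ hle)

end ModularGCD

/-- Let `f, g ∈ ℤ[x]` be non-zero and let `q` be a prime not dividing at least one of
the leading coefficients of `f` and `g`. If a greatest common divisor of the reductions
`f_q, g_q` in `(ℤ/qℤ)[x]` has degree `0`, then `f` and `g` have no common divisor of
positive degree in `ℤ[x]`. -/
theorem no_common_divisor_of_modular_gcd_deg_zero (f g : Polynomial ℤ)
    (hf : f ≠ 0) (hg : g ≠ 0) (q : ℕ) (hq : q.Prime)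
    (hlead : ¬ ((q : ℤ) ∣ f.leadingCoeff) ∨ ¬ ((q : ℤ) ∣ g.leadingCoeff))
    (e : Polynomial (ZMod q))
    (hef : e ∣ f.map (Int.castRingHom (ZMod q)))
    (heg : e ∣ g.map (Int.castRingHom (ZMod q)))
    (hegcd : ∀ e' : Polynomial (ZMod q),
      e' ∣ f.map (Int.castRingHom (ZMod q)) →
      e' ∣ g.map (Int.castRingHom (ZMod q)) → e' ∣ e)
    (hdeg : e.natDegree = 0) :
    ¬ ∃ h : Polynomial ℤ, h ∣ f ∧ h ∣ g ∧ 0 < h.natDegree := by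
  have : Fact q.Prime := ⟨hq⟩
  simp only [← ZMod.intCast_zmod_eq_zero_iff_dvd] at hlead
  exact no_common_divisor_of_modular_gcd_deg_zero_general hlead hef heg hegcd hdeg
end
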